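/- For all integers r, e, a, i, v with r ≥ 2, e ≥ 4, r < a ≤ 2r, 2 ≤ i ≤ e−2 and a ≤ v ≤ min{ C(r−1+i, i) + C(a−r−1+i, i), C(r−1+e−i, e−i) }, there exists a level standard graded artinian algebra of type 2, codimension r and socle degree e over k whose h-vector (1, r, h_2, …, h_{e-1}, 2) satisfies h_{e-1} = a and h_{e−i} = v. -/

import Mathlib

/-!
Put `b = a - r` and `d = e - i`. The ideal is taken to be the annihilator of the two forms
`∑_{p ∈ S} L_p^e` and `∑_{p ∈ T} L_p^e`, where `S` is a set of general vectors of `k^r`, `T` is a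
set of general vectors of the coordinate subspace `k^b`, and `|S| + |T| = v`. Since pairing `L_p^e`
with a form of degree `e` evaluates that form at `p` up to a scalar, the annihilator can be defined
without differentiation, as the largest ideal in the common kernel of two functionals that sum the
values of the degree-`e` component over `S` and over `T` (`annIdeal`). Such a quotient is always
level (`socle_annIdeal`).

If `S` and `T` impose independent conditions on forms of degree `i`, and `S ∪ T` on forms of
degree `d`, then the degree-`d` part of the ideal consists of the forms vanishing on `S ∪ T`, so
`h_d = |S| + |T| = v` (`hilb_annIdeal_card`). In degree `e - 1` the quotient is the space of pairs
`(∑_{p ∈ S} f(p) p, ∑_{p ∈ T} f(p) p)`, which is `k^r × k^b` when `S` spans `k^r` and `T` spans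
`k^b`, so `h_{e-1} = a` (`hilb_annIdeal_pred`). Degrees `1` and `e` are similar.

The points are chosen one by one (`exists_generic`): each independence condition fails only on the
zeros of one nonzero form, and finitely many such forms have a common non-zero because `k` is
infinite. The cardinalities allowed by the dimension counts are
`r ≤ |S| ≤ C(r-1+i, i)`, `b ≤ |T| ≤ min (C(b-1+i, i)) (C(b-1+d, d))` and
`|S| + |T| ≤ C(r-1+d, d)`; the bounds on `v` ensure that these can be met.
-/

open MvPolynomial

/-- The degree-`d` graded piece of the quotient `k[x_1,…,x_r]/I`, realized as the image of
the space of homogeneous polynomials of degree `d` in the quotient. -/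
noncomputable def quotPiece (k : Type) [Field k] (r : ℕ)
    (I : Ideal (MvPolynomial (Fin r) k)) (d : ℕ) :
    Submodule k (MvPolynomial (Fin r) k ⧸ I) :=
  (homogeneousSubmodule (Fin r) k d).map (Ideal.Quotient.mkₐ k I).toLinearMap

/-- The Hilbert function of the quotient `k[x_1,…,x_r]/I`. -/
noncomputable def hilb (k : Type) [Field k] (r : ℕ)
    (I : Ideal (MvPolynomial (Fin r) k)) (d : ℕ) : ℕ :=
  Module.finrank k (quotPiece k r I d)

/-- `A = k[x_1,…,x_r]/I` is a level standard graded artinian algebra of socle degree `e` and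
type `t`: the ideal `I` is homogeneous, the Hilbert function of `A` vanishes in degrees `> e`
and equals `t` in degree `e`, and the socle of `A` (the annihilator of the irrelevant maximal
ideal) coincides with the degree-`e` graded piece `A_e`. -/
def IsLevelQuot (k : Type) [Field k] (r e t : ℕ)
    (I : Ideal (MvPolynomial (Fin r) k)) : Prop :=
  (∀ f ∈ I, ∀ d, homogeneousComponent d f ∈ I) ∧
  (∀ d, e < d → hilb k r I d = 0) ∧
  hilb k r I e = t ∧
  {a : MvPolynomial (Fin r) k ⧸ I | ∀ i, a * Ideal.Quotient.mk I (X i) = 0} =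
    (quotPiece k r I e : Set (MvPolynomial (Fin r) k ⧸ I))

/-- A finite set `S` of vectors imposes independent conditions on forms of degree `d`: every
function on `S` is the restriction of a form of degree `d`. -/
def IndepConds {k : Type} [Field k] {r : ℕ} (S : Finset (Fin r → k)) (d : ℕ) : Prop :=
  ∀ c : (Fin r → k) → k, ∃ f : MvPolynomial (Fin r) k, f.IsHomogeneous d ∧
    ∀ p ∈ S, eval p f = c p

/-- A finite set of vectors spans `k^r`, in dual form: no nonzero linear form vanishes on it. -/
def Spans {k : Type} [Field k] {r : ℕ} (S : Finset (Fin r → k)) : Prop :=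
  ∀ c : Fin r → k, (∀ p ∈ S, ∑ j, c j * p j = 0) → c = 0

/-! ### Points in general position -/

section Points

variable {k : Type} [Field k] {r : ℕ}

theorem IndepConds.mono {S T : Finset (Fin r → k)} {d : ℕ} (h : IndepConds T d)
    (hST : S ⊆ T) : IndepConds S d :=
  fun c => (h c).imp fun _ hf => ⟨hf.1, fun p hp => hf.2 p (hST hp)⟩

theorem sep_empty (d : ℕ) : IndepConds (∅ : Finset (Fin r → k)) d :=
  fun _ => ⟨0, isHomogeneous_zero _ _ _, by simp⟩

theorem IndepConds.of_indicator {S : Finset (Fin r → k)} {d : ℕ}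
    (h : ∀ p ∈ S, ∃ f : MvPolynomial (Fin r) k, f.IsHomogeneous d ∧ eval p f ≠ 0 ∧
      ∀ q ∈ S, q ≠ p → eval q f = 0) : IndepConds S d := by
  intro c
  choose! F hF1 hF2 hF3 using h
  refine ⟨∑ p ∈ S, C (c p / eval p (F p)) * F p,
    IsHomogeneous.sum _ _ _ fun p hp => (hF1 p hp).C_mul _, fun q hq => ?_⟩
  rw [map_sum, Finset.sum_eq_single_of_mem q hq]
  · simp [hF2 q hq]
  · intro p hp hpq
    simp [hF3 p hp q hq hpq.symm]

theorem IndepConds.indicator {S : Finset (Fin r → k)} {d : ℕ} (h : IndepConds S d) {p : Fin r → k} :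
    ∃ f : MvPolynomial (Fin r) k, f.IsHomogeneous d ∧ (p ∈ S → eval p f = 1) ∧
      ∀ q ∈ S, q ≠ p → eval q f = 0 := by
  classical
  obtain ⟨f, hf, hf'⟩ := h (fun q => if q = p then 1 else 0)
  exact ⟨f, hf, fun hp => by simp [hf' p hp], fun q hq hqp => by simp [hf' q hq, hqp]⟩

/-- Independence of conditions persists in higher degrees: multiply the separating forms by a
power of a coordinate that does not vanish at the chosen point. -/
theorem IndepConds.mono_degree {S : Finset (Fin r → k)} {d d' : ℕ} (hd : 1 ≤ d) (h : IndepConds S d)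
    (hdd : d ≤ d') : IndepConds S d' := by
  refine IndepConds.of_indicator fun p hp => ?_
  obtain ⟨f, hf, hfp, hfq⟩ := h.indicator (p := p)
  -- A form of positive degree vanishes at the origin, so `p ≠ 0`.
  have hp0 : ∃ j, p j ≠ 0 := by
    by_contra! hcon
    have : p = 0 := funext hcon
    have h1 := hfp hp
    rw [this, MvPolynomial.eval_zero, constantCoeff_eq, hf.coeff_eq_zero (by simp; omega)] at h1
    exact zero_ne_one h1
  obtain ⟨j, hj⟩ := hp0
  refine ⟨f * X j ^ (d' - d), ?_, ?_, ?_⟩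
  · have := hf.mul (isHomogeneous_X_pow (R := k) j (d' - d))
    rwa [Nat.add_sub_cancel' hdd] at this
  · simp [hfp hp, hj]
  · intro q hq hqp
    simp [hfq q hq hqp]

/-- Fewer points than the dimension of the forms of degree `d` always lie on a hypersurface of
degree `d`. -/
theorem exists_form_vanishing (S : Finset (Fin r → k)) (d : ℕ) (hr : 1 ≤ r)
    (hS : S.card < (r - 1 + d).choose d) :
    ∃ g : MvPolynomial (Fin r) k, g.IsHomogeneous d ∧ g ≠ 0 ∧ ∀ p ∈ S, eval p g = 0 := by
  classical
  let A := (Finset.univ : Finset (Fin r)).finsuppAntidiag d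
  have hA : A.card = (r - 1 + d).choose d := by
    rw [Finset.card_finsuppAntidiag_nat_eq_choose, Finset.card_fin]
    congr 1; omega
  let P : (A → k) →ₗ[k] MvPolynomial (Fin r) k :=
    ∑ α : A, (monomial α.1).comp (LinearMap.proj α)
  have hP : ∀ c, P c = ∑ α : A, monomial α.1 (c α) := by
    intro c; simp [P, LinearMap.sum_apply]
  let E : (A → k) →ₗ[k] (S → k) :=
    LinearMap.pi fun p => (aeval (R := k) p.1).toLinearMap.comp P
  have hE : LinearMap.ker E ≠ ⊥ := by
    apply LinearMap.ker_ne_bot_of_finrank_lt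
    simp [hA, hS]
  obtain ⟨c, hc, hc0⟩ := (Submodule.ne_bot_iff _).1 hE
  refine ⟨P c, ?_, ?_, ?_⟩
  · rw [hP]
    refine IsHomogeneous.sum _ _ _ fun α _ => isHomogeneous_monomial _ ?_
    have := α.2
    simp only [A, Finset.mem_finsuppAntidiag] at this
    rw [Finsupp.degree_eq_sum]
    exact this.1
  · intro h0
    apply hc0
    funext α
    have := congrArg (coeff α.1) h0
    rw [hP, coeff_sum, Finset.sum_eq_single_of_mem α (Finset.mem_univ _)] at this
    · simpa using this
    · intro β _ hβ
      rw [coeff_monomial, if_neg (fun h => hβ (Subtype.ext h))]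
  · intro p hp
    have := congrFun (LinearMap.mem_ker.1 hc) ⟨p, hp⟩
    simpa [E, aeval_eq_eval] using this

/-- Independence survives adding a point `q` off a hypersurface through the old points. -/
theorem IndepConds.insert [DecidableEq (Fin r → k)] {S : Finset (Fin r → k)} {d : ℕ}
    (h : IndepConds S d) {q : Fin r → k} {g : MvPolynomial (Fin r) k}
    (hg : g.IsHomogeneous d) (hgS : ∀ p ∈ S, eval p g = 0) (hgq : eval q g ≠ 0) :
    IndepConds (insert q S) d := by
  intro c
  obtain ⟨f, hf, hfS⟩ := h c
  refine ⟨f + C ((c q - eval q f) / eval q g) * g, hf.add (hg.C_mul _), fun p hp => ?_⟩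
  rcases Finset.mem_insert.1 hp with rfl | hp
  · simp [hgq]
  · simp [hfS p hp, hgS p hp]

/-- Points may be added one at a time so that several independence conditions hold together.
At each step, each condition excludes only the zeros of one nonzero form, and over an infinite
field the product of these forms has a non-zero. -/
theorem exists_generic [DecidableEq (Fin r → k)] [Infinite k] (hr : 1 ≤ r) {ι : Type} [Fintype ι]
    [Nonempty ι]
    (B : ι → Finset (Fin r → k)) (D : ι → ℕ) (hB : ∀ l, IndepConds (B l) (D l)) (n : ℕ)
    (hn : ∀ l, (B l).card + n ≤ (r - 1 + D l).choose (D l)) :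
    ∃ X : Finset (Fin r → k), X.card = n ∧ ∀ l, Disjoint X (B l) ∧ IndepConds (X ∪ B l) (D l) := by
  induction n with
  | zero => exact ⟨∅, rfl, fun l => by simpa using hB l⟩
  | succ n ih =>
    obtain ⟨X, hX, hX'⟩ := ih fun l => by have := hn l; omega
    have hg : ∀ l, ∃ g : MvPolynomial (Fin r) k, g.IsHomogeneous (D l) ∧ g ≠ 0 ∧
        ∀ p ∈ X ∪ B l, eval p g = 0 := fun l => by
      refine exists_form_vanishing _ _ hr ?_
      have := hn l
      have := Finset.card_union_le X (B l)
      omega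
    choose g hg1 hg2 hg3 using hg
    have hprod : ∏ l, g l ≠ 0 := Finset.prod_ne_zero_iff.2 fun l _ => hg2 l
    obtain ⟨q, hq⟩ : ∃ q, eval q (∏ l, g l) ≠ 0 := by
      by_contra! hcon
      exact hprod (MvPolynomial.funext fun q => by rw [hcon, map_zero])
    rw [map_prod, Finset.prod_ne_zero_iff] at hq
    have hqn : ∀ l, q ∉ X ∪ B l := fun l hmem => hq l (Finset.mem_univ _) (hg3 l q hmem)
    refine ⟨insert q X, ?_, fun l => ⟨?_, ?_⟩⟩
    · rw [Finset.card_insert_of_notMem, hX]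
      obtain ⟨l⟩ := ‹Nonempty ι›
      exact fun h => hqn l (Finset.mem_union_left _ h)
    · rw [Finset.disjoint_insert_left]
      exact ⟨fun h => hqn l (Finset.mem_union_right _ h), (hX' l).1⟩
    · rw [Finset.insert_union]
      exact (hX' l).2.insert (hg1 l) (hg3 l) (hq l (Finset.mem_univ _))

theorem exists_coeffs_of_isHomogeneous_one {f : MvPolynomial (Fin r) k} (hf : f.IsHomogeneous 1) :
    ∃ c : Fin r → k, ∀ x, eval x f = ∑ j, c j * x j := by
  have : f ∈ homogeneousSubmodule (Fin r) k 1 := hf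
  rw [homogeneousSubmodule_one_eq_span_X, Submodule.mem_span_range_iff_exists_fun] at this
  obtain ⟨c, rfl⟩ := this
  exact ⟨c, fun x => by simp [smul_eval]⟩

/-- For exactly `r` points, independence in degree one makes a square linear system bijective. -/
theorem IndepConds.spans {S : Finset (Fin r → k)} (h : IndepConds S 1) (hS : S.card = r) : Spans S := by
  intro c hc
  let E : (Fin r → k) →ₗ[k] (S → k) :=
    LinearMap.pi fun p => ∑ j, p.1 j • LinearMap.proj j
  have hE : ∀ c p, E c p = ∑ j, c j * p.1 j := by
    intro c p; simp [E, LinearMap.sum_apply, mul_comm]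
  have hsurj : Function.Surjective E := by
    classical
    intro w
    obtain ⟨f, hf, hf'⟩ := h (fun p => if hp : p ∈ S then w ⟨p, hp⟩ else 0)
    obtain ⟨a, ha⟩ := exists_coeffs_of_isHomogeneous_one hf
    refine ⟨a, funext fun p => ?_⟩
    rw [hE, ← ha, hf' p.1 p.2]
    simp
  have hinj := (LinearMap.injective_iff_surjective_of_finrank_eq_finrank
    (f := E) (by simp [hS])).2 hsurj
  apply hinj
  rw [map_zero]
  funext p
  rw [hE]
  exact hc p.1 p.2

/-- The generic point sets used below: `X` is independent in degree `i`, spans `k^r`, and stays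
independent in degree `d` together with a given set `B`. -/
theorem exists_points [DecidableEq (Fin r → k)] [Infinite k] (hr : 1 ≤ r)
    (B : Finset (Fin r → k)) (i d n : ℕ) (hB : IndepConds B d)
    (hrn : r ≤ n) (hni : n ≤ (r - 1 + i).choose i) (hnd : B.card + n ≤ (r - 1 + d).choose d) :
    ∃ X : Finset (Fin r → k), X.card = n ∧ Disjoint X B ∧ IndepConds X i ∧
      IndepConds (X ∪ B) d ∧ Spans X := by
  -- First `r` points that are moreover independent in degree one, hence spanning.
  obtain ⟨X₀, hX₀, h₀⟩ := exists_generic hr ![∅, ∅, B] ![1, i, d]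
    (by simp [Fin.forall_fin_succ, sep_empty, hB]) r (by
      simp only [Fin.forall_fin_succ]
      refine ⟨?_, ?_, ?_, fun x => x.elim0⟩
      · simp; omega
      · simp; omega
      · simp; omega)
  simp only [Fin.forall_fin_succ] at h₀
  obtain ⟨⟨-, h1⟩, ⟨-, h2⟩, ⟨h3, h4⟩, -⟩ := h₀
  simp at h1 h2 h3 h4
  obtain ⟨X₁, hX₁, h₁⟩ := exists_generic hr ![X₀, X₀ ∪ B] ![i, d]
    (by simp [Fin.forall_fin_succ, h2, h4]) (n - r) (by
      simp only [Fin.forall_fin_succ]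
      refine ⟨?_, ?_, fun x => x.elim0⟩
      · simp; omega
      · have := Finset.card_union_le X₀ B
        simp; omega)
  simp only [Fin.forall_fin_succ] at h₁
  obtain ⟨⟨h5, h6⟩, ⟨h7, h8⟩, -⟩ := h₁
  simp at h5 h6 h7 h8
  refine ⟨X₁ ∪ X₀, ?_, ?_, h6, ?_, ?_⟩
  · rw [Finset.card_union_of_disjoint h5]; omega
  · rw [Finset.disjoint_union_left]
    exact ⟨h7.2, h3⟩
  · rwa [Finset.union_assoc]
  · exact fun c hc => h1.spans hX₀ c fun p hp => hc p (Finset.mem_union_right _ hp)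

theorem Spans.surjective {S : Finset (Fin r → k)} (h : Spans S) (w : Fin r → k) :
    ∃ c : (Fin r → k) → k, ∀ j, ∑ p ∈ S, c p * p j = w j := by
  let E : ((Fin r → k) → k) →ₗ[k] (Fin r → k) :=
    ∑ p ∈ S, (LinearMap.proj p : ((Fin r → k) → k) →ₗ[k] k).smulRight p
  have hE : ∀ c, E c = ∑ p ∈ S, c p • p := by
    intro c; simp [E, LinearMap.sum_apply]
  have htop : LinearMap.range E = ⊤ := by
    classical
    by_contra hne
    obtain ⟨φ, hφ0, hφ⟩ := Submodule.exists_le_ker_of_lt_top _ (lt_top_iff_ne_top.2 hne)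
    apply hφ0
    have hφe : ∀ x : Fin r → k, φ x = ∑ j, φ (Pi.single j 1) * x j := by
      intro x
      conv_lhs => rw [pi_eq_sum_univ' x]
      simp [map_sum, mul_comm]
    have h0 := h (fun j => φ (Pi.single j 1)) fun p hp => by
      rw [← hφe]
      have : E (Pi.single p 1) = p := by
        rw [hE, Finset.sum_eq_single_of_mem p hp]
        · simp
        · intro q _ hq; simp [hq]
      have h1 := hφ (LinearMap.mem_range_self E (Pi.single p 1))
      rwa [this] at h1
    ext j
    simpa using congrFun h0 j
  obtain ⟨c, hc⟩ := LinearMap.range_eq_top.1 htop w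
  refine ⟨c, fun j => ?_⟩
  rw [← hc, hE]
  simp

end Points

/-! ### The annihilator of two sums of powers -/

section InverseSystem

variable {k : Type} [Field k] {r : ℕ}

/-- The functional on polynomials that sums over `S` the values of the degree-`e` component.
Up to a scalar, this is pairing with the form `∑_{p ∈ S} L_p^e`. -/
noncomputable def evalSum (S : Finset (Fin r → k)) (e : ℕ) : MvPolynomial (Fin r) k →ₗ[k] k :=
  ∑ p ∈ S, (aeval (R := k) p).toLinearMap.comp (homogeneousComponent e)

theorem evalSum_apply (S : Finset (Fin r → k)) (e : ℕ) (f : MvPolynomial (Fin r) k) :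
    evalSum S e f = ∑ p ∈ S, eval p (homogeneousComponent e f) := by
  simp [evalSum, LinearMap.sum_apply, aeval_eq_eval]

/-- The annihilator of the two forms `∑_{p ∈ S} L_p^e` and `∑_{p ∈ T} L_p^e`: the largest ideal
on which both functionals `evalSum S e` and `evalSum T e` vanish. -/
noncomputable def annIdeal (S T : Finset (Fin r → k)) (e : ℕ) : Ideal (MvPolynomial (Fin r) k) where
  carrier := {f | ∀ g, evalSum S e (f * g) = 0 ∧ evalSum T e (f * g) = 0}
  add_mem' {f f'} hf hf' g := by simp [add_mul, hf g, hf' g]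
  zero_mem' g := by simp
  smul_mem' c f hf g := by
    have := hf (c * g)
    rwa [mul_left_comm, ← mul_assoc] at this

theorem homogeneousComponent_mul_of_le {f g : MvPolynomial (Fin r) k} {m n e : ℕ}
    (hf : f.IsHomogeneous m) (hmn : m + n = e) :
    homogeneousComponent e (f * g) = f * homogeneousComponent n g := by
  let _ := gradedAlgebra (σ := Fin r) (R := k)
  have h := DirectSum.coe_decompose_mul_of_left_mem_of_le (homogeneousSubmodule (Fin r) k)
    (a := f) (b := g) (i := m) (n := e) hf (by omega)
  have h1 : ∀ (p : MvPolynomial (Fin r) k) (j : ℕ),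
    (DirectSum.decompose (homogeneousSubmodule (Fin r) k) p j : MvPolynomial (Fin r) k) =
      homogeneousComponent j p := fun p j => decomposition.decompose'_apply p j
  rw [h1, h1] at h
  rw [h, show e - m = n by omega]

theorem homogeneousComponent_mul_of_lt {f g : MvPolynomial (Fin r) k} {m e : ℕ}
    (hf : f.IsHomogeneous m) (hme : e < m) :
    homogeneousComponent e (f * g) = 0 := by
  let _ := gradedAlgebra (σ := Fin r) (R := k)
  have h := DirectSum.coe_decompose_mul_of_left_mem_of_not_le (homogeneousSubmodule (Fin r) k)
    (a := f) (b := g) (i := m) (n := e) hf (by omega)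
  have h1 : ∀ (p : MvPolynomial (Fin r) k) (j : ℕ),
    (DirectSum.decompose (homogeneousSubmodule (Fin r) k) p j : MvPolynomial (Fin r) k) =
      homogeneousComponent j p := fun p j => decomposition.decompose'_apply p j
  rwa [h1] at h

variable {S T : Finset (Fin r → k)} {e : ℕ}

theorem mem_annIdeal_of_lt {f : MvPolynomial (Fin r) k} {m : ℕ} (hf : f.IsHomogeneous m)
    (hm : e < m) : f ∈ annIdeal S T e := fun g => by
  simp [evalSum_apply, homogeneousComponent_mul_of_lt hf hm]

/-- Membership of a form of degree `m` is tested against forms of the complementary degree. -/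
theorem mem_annIdeal_iff {f : MvPolynomial (Fin r) k} {m n : ℕ} (hf : f.IsHomogeneous m)
    (hmn : m + n = e) : f ∈ annIdeal S T e ↔
      ∀ g : MvPolynomial (Fin r) k, g.IsHomogeneous n →
        ∑ p ∈ S, eval p f * eval p g = 0 ∧ ∑ p ∈ T, eval p f * eval p g = 0 := by
  constructor
  · intro h g hg
    have := h g
    simpa [evalSum_apply, homogeneousComponent_mul_of_le hf hmn,
      homogeneousComponent_eq_self hg] using this
  · intro h g
    have := h _ (homogeneousComponent_isHomogeneous n g)
    simpa [evalSum_apply, homogeneousComponent_mul_of_le hf hmn] using this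

theorem homogeneousComponent_mem_annIdeal {f : MvPolynomial (Fin r) k} (hf : f ∈ annIdeal S T e)
    (d : ℕ) : homogeneousComponent d f ∈ annIdeal S T e := by
  rcases lt_or_ge e d with hd | hd
  · exact mem_annIdeal_of_lt (homogeneousComponent_isHomogeneous d f) hd
  · rw [mem_annIdeal_iff (homogeneousComponent_isHomogeneous d f) (Nat.add_sub_cancel' hd)]
    intro g hg
    have := hf g
    rw [mul_comm, evalSum_apply, evalSum_apply,
      homogeneousComponent_mul_of_le hg (Nat.sub_add_cancel hd)] at this
    simpa [mul_comm] using this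

/-- The socle of the quotient is its degree-`e` piece: if `f` has degree `m < e` and all `f * X j`
are annihilators, so is `f`, since forms of degree `e - m > 0` lie in the ideal of the variables. -/
theorem socle_annIdeal :
    {a : MvPolynomial (Fin r) k ⧸ annIdeal S T e |
      ∀ i, a * Ideal.Quotient.mk (annIdeal S T e) (X i) = 0} =
    (quotPiece k r (annIdeal S T e) e : Set (MvPolynomial (Fin r) k ⧸ annIdeal S T e)) := by
  ext a
  simp only [Set.mem_ofPred_eq, SetLike.mem_coe]
  constructor
  · intro ha
    obtain ⟨f, rfl⟩ := Ideal.Quotient.mk_surjective a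
    have hfX : ∀ j, f * X j ∈ annIdeal S T e := fun j => by
      rw [← Ideal.Quotient.eq_zero_iff_mem, map_mul]; exact ha j
    have hcomp : ∀ m, m ≠ e → homogeneousComponent m f ∈ annIdeal S T e := by
      intro m hm
      have hmh := homogeneousComponent_isHomogeneous m f
      rcases lt_or_gt_of_ne hm with hlt | hgt
      · have hX : ∀ j, homogeneousComponent m f * X j ∈ annIdeal S T e := fun j => by
          have h1 := homogeneousComponent_mem_annIdeal (hfX j) (1 + m)
          rwa [mul_comm, homogeneousComponent_mul_of_le (isHomogeneous_X k j) rfl, mul_comm] at h1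
        rw [mem_annIdeal_iff hmh (Nat.add_sub_cancel' hlt.le)]
        intro g hg
        -- `g` has no constant term, so it lies in the ideal generated by the variables.
        have hgI : g ∈ Ideal.span (Set.range (X : Fin r → MvPolynomial (Fin r) k)) := by
          rw [← Set.image_univ, mem_ideal_span_X_image]
          intro α hα
          have hdeg : α.degree = e - m := by
            by_contra hne
            exact (mem_support_iff.1 hα) (hg.coeff_eq_zero hne)
          by_contra! hcon
          have : α = 0 := by ext j; exact hcon j (Set.mem_univ _)
          rw [this] at hdeg
          simp at hdeg
          omega
        have hmul : homogeneousComponent m f * g ∈ annIdeal S T e := by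
          rw [Ideal.mem_span_range_iff_exists_fun] at hgI
          obtain ⟨c, rfl⟩ := hgI
          rw [Finset.mul_sum]
          refine Ideal.sum_mem _ fun j _ => ?_
          rw [mul_left_comm]
          exact Ideal.mul_mem_left _ _ (hX j)
        have := (mem_annIdeal_iff (hmh.mul hg) (n := 0) (by omega)).1 hmul 1
          (isHomogeneous_one _ _)
        simpa using this
      · exact mem_annIdeal_of_lt hmh hgt
    refine Submodule.mem_map.2 ⟨homogeneousComponent e f, homogeneousComponent_mem e f, ?_⟩
    change Ideal.Quotient.mk _ _ = Ideal.Quotient.mk _ _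
    rw [eq_comm, Ideal.Quotient.eq]
    have hcompe : ∀ m, homogeneousComponent m (f - homogeneousComponent e f) ∈
        annIdeal S T e := by
      intro m
      rw [map_sub, homogeneousComponent_of_mem (homogeneousComponent_mem e f)]
      split_ifs with h
      · simp [h]
      · simpa using hcomp m h
    rw [← sum_homogeneousComponent (f - homogeneousComponent e f)]
    exact Ideal.sum_mem _ fun m _ => hcompe m
  · rintro ⟨f, hf, rfl⟩ j
    change Ideal.Quotient.mk _ f * _ = 0
    rw [← map_mul, Ideal.Quotient.eq_zero_iff_mem]
    exact mem_annIdeal_of_lt (IsHomogeneous.mul hf (isHomogeneous_X k j)) (Nat.lt_succ_self e)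

/-- The Hilbert function in degree `m` is the dimension of any space onto which the forms of
degree `m` map with kernel the degree-`m` part of the ideal. -/
theorem hilb_eq_finrank {V : Type} [AddCommGroup V] [Module k V]
    (I : Ideal (MvPolynomial (Fin r) k)) (m : ℕ) (L : MvPolynomial (Fin r) k →ₗ[k] V)
    (hker : ∀ f : MvPolynomial (Fin r) k, f.IsHomogeneous m → (f ∈ I ↔ L f = 0))
    (hsurj : ∀ w, ∃ f : MvPolynomial (Fin r) k, f.IsHomogeneous m ∧ L f = w) :
    hilb k r I m = Module.finrank k V := by
  let H := homogeneousSubmodule (Fin r) k m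
  let Q := (Ideal.Quotient.mkₐ k I).toLinearMap.comp H.subtype
  let L' := L.comp H.subtype
  have hQ : quotPiece k r I m = LinearMap.range Q := by
    rw [LinearMap.range_comp, Submodule.range_subtype]; rfl
  have hk : LinearMap.ker Q = LinearMap.ker L' := by
    ext f
    have h1 : Q f = Ideal.Quotient.mk I f.1 := rfl
    have h2 : L' f = L f.1 := rfl
    rw [LinearMap.mem_ker, LinearMap.mem_ker, h1, h2, Ideal.Quotient.eq_zero_iff_mem]
    exact hker f.1 f.2
  have hs : Function.Surjective L' := fun w => by
    obtain ⟨f, hf, hw⟩ := hsurj w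
    exact ⟨⟨f, hf⟩, hw⟩
  rw [hilb, hQ]
  exact (((Q.quotKerEquivRange).symm.trans (Submodule.quotEquivOfEq _ _ hk)).trans
    (L'.quotKerEquivOfSurjective hs)).finrank_eq

/-- If `S` is independent in degree `n`, the pairing of functions on `S` with forms of degree `n`
is nondegenerate. -/
theorem IndepConds.eq_zero_of_forall {n : ℕ} (h : IndepConds S n) {u : (Fin r → k) → k}
    (hu : ∀ g : MvPolynomial (Fin r) k, g.IsHomogeneous n → ∑ p ∈ S, u p * eval p g = 0) :
    ∀ p ∈ S, u p = 0 := by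
  intro p hp
  obtain ⟨g, hg, hgp, hgq⟩ := h.indicator (p := p)
  have := hu g hg
  rwa [Finset.sum_eq_single_of_mem p hp (fun q hq hqp => by simp [hgq q hq hqp]), hgp hp,
    mul_one] at this

theorem hilb_annIdeal_one {n : ℕ} (hn : 1 + n = e) (hS : IndepConds S n) (hspan : Spans S) :
    hilb k r (annIdeal S T e) 1 = r := by
  rw [hilb_eq_finrank (V := Fin r → k) _ 1
    (LinearMap.pi fun j => (aeval (R := k) (Pi.single j 1 : Fin r → k)).toLinearMap)]
  · simp
  · intro f hf
    obtain ⟨c, hc⟩ := exists_coeffs_of_isHomogeneous_one hf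
    have hL : ∀ j, eval (Pi.single j 1 : Fin r → k) f = c j := fun j => by
      simp [hc, Pi.single_apply]
    rw [mem_annIdeal_iff hf hn]
    constructor
    · intro h
      have h1 := hS.eq_zero_of_forall (u := fun p => eval p f) fun g hg => (h g hg).1
      have h2 := hspan c fun p hp => by rw [← hc]; exact h1 p hp
      funext j
      simp [aeval_eq_eval, hL, h2]
    · intro h g _
      have h2 : c = 0 := funext fun j => by
        rw [← hL]; simpa [aeval_eq_eval] using congrFun h j
      simp [hc, h2]
  · intro w
    refine ⟨∑ j, C (w j) * X j, IsHomogeneous.sum _ _ _ fun j _ => isHomogeneous_C_mul_X _ _, ?_⟩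
    funext j
    simp [aeval_eq_eval, Pi.single_apply]

variable [DecidableEq (Fin r → k)]

/-- In a degree `d` where `S ∪ T` is independent, with `S` and `T` independent in the complementary
degree, the ideal consists of the forms vanishing on `S ∪ T`. -/
theorem hilb_annIdeal_card (hST : Disjoint S T) {d n : ℕ} (hdn : d + n = e)
    (hS : IndepConds S n) (hT : IndepConds T n) (hU : IndepConds (S ∪ T) d) :
    hilb k r (annIdeal S T e) d = S.card + T.card := by
  rw [hilb_eq_finrank (V := ↥(S ∪ T) → k) _ d
    (LinearMap.pi fun p => (aeval (R := k) p.1).toLinearMap)]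
  · simp [Finset.card_union_of_disjoint hST]
  · intro f hf
    rw [mem_annIdeal_iff hf hdn]
    constructor
    · intro h
      funext p
      have h1 := hS.eq_zero_of_forall (u := fun p => eval p f) fun g hg => (h g hg).1
      have h2 := hT.eq_zero_of_forall (u := fun p => eval p f) fun g hg => (h g hg).2
      rcases Finset.mem_union.1 p.2 with hp | hp
      · simpa [aeval_eq_eval] using h1 p.1 hp
      · simpa [aeval_eq_eval] using h2 p.1 hp
    · intro h g _
      have h0 : ∀ p ∈ S ∪ T, eval p f = 0 := fun p hp => by
        simpa [aeval_eq_eval] using congrFun h ⟨p, hp⟩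
      exact ⟨Finset.sum_eq_zero fun p hp => by simp [h0 p (Finset.mem_union_left _ hp)],
        Finset.sum_eq_zero fun p hp => by simp [h0 p (Finset.mem_union_right _ hp)]⟩
  · intro w
    obtain ⟨f, hf, hf'⟩ := hU (fun p => if hp : p ∈ S ∪ T then w ⟨p, hp⟩ else 0)
    refine ⟨f, hf, funext fun p => ?_⟩
    have := hf' p.1 p.2
    rw [dif_pos p.2] at this
    simpa [aeval_eq_eval] using this

theorem hilb_annIdeal_top (hST : Disjoint S T) (hS : S.Nonempty) (hT : T.Nonempty)
    (hU : IndepConds (S ∪ T) e) : hilb k r (annIdeal S T e) e = 2 := by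
  rw [hilb_eq_finrank (V := k × k) _ e
    (LinearMap.prod (∑ p ∈ S, (aeval (R := k) p).toLinearMap)
      (∑ p ∈ T, (aeval (R := k) p).toLinearMap))]
  · simp
  · intro f hf
    rw [mem_annIdeal_iff hf (add_zero e)]
    simp only [LinearMap.prod_apply, Function.prod, LinearMap.sum_apply, AlgHom.toLinearMap_apply,
      aeval_eq_eval, Prod.mk_eq_zero]
    constructor
    · intro h
      simpa using h 1 (isHomogeneous_one _ _)
    · intro h g hg
      obtain ⟨c, rfl⟩ : ∃ c, g = C c :=
        ⟨_, totalDegree_eq_zero_iff_eq_C.1 ((totalDegree_zero_iff_isHomogeneous _).2 hg)⟩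
      simp only [eval_C, ← Finset.sum_mul]
      simpa using ⟨Or.inl h.1, Or.inl h.2⟩
  · rintro ⟨w₁, w₂⟩
    obtain ⟨s, hs⟩ := hS
    obtain ⟨t, ht⟩ := hT
    obtain ⟨f, hf, hf'⟩ := hU (fun p => if p = s then w₁ else if p = t then w₂ else 0)
    have hst : t ≠ s := fun h => Finset.disjoint_left.1 hST hs (h ▸ ht)
    refine ⟨f, hf, ?_⟩
    simp only [LinearMap.prod_apply, Function.prod, LinearMap.sum_apply, AlgHom.toLinearMap_apply,
      aeval_eq_eval, Prod.mk.injEq]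
    constructor
    · change ∑ p ∈ S, eval p f = w₁
      rw [Finset.sum_eq_single_of_mem s hs]
      · simp [hf' s (Finset.mem_union_left _ hs)]
      · intro p hp hps
        have hpt : p ≠ t := fun h => Finset.disjoint_left.1 hST hp (h ▸ ht)
        simp [hf' p (Finset.mem_union_left _ hp), hps, hpt]
    · change ∑ p ∈ T, eval p f = w₂
      rw [Finset.sum_eq_single_of_mem t ht]
      · simp [hf' t (Finset.mem_union_right _ ht), hst]
      · intro p hp hpt
        have hps : p ≠ s := fun h => Finset.disjoint_left.1 hST hs (h ▸ hp)
        simp [hf' p (Finset.mem_union_right _ hp), hps, hpt]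

end InverseSystem

/-! ### Vectors in a coordinate subspace, and degree `e - 1` -/

section Extension

variable {k : Type} [Field k] {r b : ℕ}

/-- The inclusion of `k^b` into `k^r` as the vectors supported on the first `b` coordinates. -/
noncomputable def extendVec (hb : b ≤ r) : (Fin b → k) ↪ (Fin r → k) where
  toFun y := Function.extend (Fin.castLE hb) y 0
  inj' y z h := by
    funext j
    have := congrFun h (Fin.castLE hb j)
    simpa [(Fin.castLE_injective hb).extend_apply] using this

theorem extendVec_castLE (hb : b ≤ r) (y : Fin b → k) (j : Fin b) :
    extendVec hb y (Fin.castLE hb j) = y j :=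
  (Fin.castLE_injective hb).extend_apply _ _ _

theorem sum_mul_extendVec (hb : b ≤ r) (c : Fin r → k) (y : Fin b → k) :
    ∑ j, c j * extendVec hb y j = ∑ j, c (Fin.castLE hb j) * y j := by
  classical
  symm
  have h := Finset.sum_map Finset.univ (Fin.castLEEmb hb) (fun j => c j * extendVec hb y j)
  simp only [Fin.castLEEmb_apply, extendVec_castLE] at h
  rw [← h]
  refine Finset.sum_subset (Finset.subset_univ _) fun j _ hj => ?_
  have hj' : ¬ ∃ l, Fin.castLE hb l = j := by simpa using hj
  have : extendVec hb y j = 0 := Function.extend_apply' _ _ _ hj'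
  rw [this, mul_zero]

theorem IndepConds.map_extendVec (hb : b ≤ r) {Y : Finset (Fin b → k)} {d : ℕ} (h : IndepConds Y d) :
    IndepConds (Y.map (extendVec hb)) d := by
  intro c
  obtain ⟨f, hf, hf'⟩ := h (fun y => c (extendVec hb y))
  refine ⟨rename (Fin.castLE hb) f, hf.rename_isHomogeneous, fun p hp => ?_⟩
  obtain ⟨y, hy, rfl⟩ := Finset.mem_map.1 hp
  rw [eval_rename, ← hf' y hy]
  congr 2
  funext j
  exact extendVec_castLE hb y j

/-- In degree `e - 1` the pairing with linear forms sends `f` to the vectors `∑_{p ∈ S} f(p) p`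
and `∑_{p ∈ T} f(p) p`, which range over all of `k^r × k^b`. -/
theorem hilb_annIdeal_pred [DecidableEq (Fin r → k)] (hb : b ≤ r) {S : Finset (Fin r → k)}
    {Y : Finset (Fin b → k)} {e n : ℕ} (hn : n + 1 = e)
    (hST : Disjoint S (Y.map (extendVec hb))) (hS : Spans S) (hY : Spans Y)
    (hU : IndepConds (S ∪ Y.map (extendVec hb)) n) :
    hilb k r (annIdeal S (Y.map (extendVec hb)) e) n = r + b := by
  rw [hilb_eq_finrank (V := (Fin r → k) × (Fin b → k)) _ n
    (LinearMap.prod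
      (∑ p ∈ S, (aeval (R := k) p).toLinearMap.smulRight p)
      (∑ y ∈ Y, (aeval (R := k) (extendVec hb y)).toLinearMap.smulRight y))]
  · simp
  · intro f hf
    rw [mem_annIdeal_iff hf hn]
    simp only [LinearMap.prod_apply, Function.prod, LinearMap.sum_apply, AlgHom.toLinearMap_apply,
      aeval_eq_eval, Prod.mk_eq_zero, LinearMap.smulRight_apply, Finset.sum_map]
    constructor
    · intro h
      constructor
      · funext j
        simpa using (h (X j) (isHomogeneous_X k j)).1
      · funext j
        simpa [extendVec_castLE] using (h (X (Fin.castLE hb j)) (isHomogeneous_X k _)).2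
    · rintro ⟨h1, h2⟩ g hg
      obtain ⟨c, hc⟩ := exists_coeffs_of_isHomogeneous_one hg
      simp only [hc, sum_mul_extendVec]
      constructor
      · have h3 : ∀ j, ∑ p ∈ S, eval p f * p j = 0 := fun j => by
          simpa using congrFun h1 j
        simp only [Finset.mul_sum, mul_left_comm _ (c _)]
        rw [Finset.sum_comm]
        simp [← Finset.mul_sum, h3]
      · have h3 : ∀ j, ∑ y ∈ Y, eval (extendVec hb y) f * y j = 0 := fun j => by
          simpa using congrFun h2 j
        simp only [Finset.mul_sum, mul_left_comm _ (c _)]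
        rw [Finset.sum_comm]
        simp [← Finset.mul_sum, h3]
  · rintro ⟨w₁, w₂⟩
    obtain ⟨c₁, hc₁⟩ := hS.surjective w₁
    obtain ⟨c₂, hc₂⟩ := hY.surjective w₂
    obtain ⟨f, hf, hf'⟩ := hU fun p =>
      if p ∈ S then c₁ p else c₂ fun j => p (Fin.castLE hb j)
    refine ⟨f, hf, ?_⟩
    have hfS : ∀ p ∈ S, eval p f = c₁ p := fun p hp => by
      simp [hf' p (Finset.mem_union_left _ hp), hp]
    have hfY : ∀ y ∈ Y, eval (extendVec hb y) f = c₂ y := fun y hy => by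
      have hmem := Finset.mem_map_of_mem (extendVec hb) hy
      rw [hf' _ (Finset.mem_union_right _ hmem),
        if_neg fun h => Finset.disjoint_left.1 hST h hmem]
      congr 1
      funext j
      exact extendVec_castLE hb y j
    simp only [LinearMap.prod_apply, Function.prod, LinearMap.sum_apply, AlgHom.toLinearMap_apply,
      aeval_eq_eval, Prod.mk.injEq, LinearMap.smulRight_apply]
    constructor
    · funext j
      rw [← hc₁ j, Finset.sum_apply]
      exact Finset.sum_congr rfl fun p hp => by simp [hfS p hp]
    · funext j
      rw [← hc₂ j, Finset.sum_apply]
      exact Finset.sum_congr rfl fun y hy => by simp [hfY y hy]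

end Extension

/-! ### Choice of cardinalities -/

theorem le_choose_self (b i : ℕ) (hb : 1 ≤ b) (hi : 1 ≤ i) : b ≤ (b - 1 + i).choose i := by
  have h : (b - 1 + 1).choose 1 ≤ (b - 1 + i).choose (b - 1) := by
    rw [Nat.choose_symm_add (a := b - 1) (b := 1) |>.symm]
    exact Nat.choose_le_choose _ (by omega)
  rw [Nat.choose_symm_add] at h
  simp at h
  omega

theorem choose_mono_degree (b : ℕ) {i d : ℕ} (hid : i ≤ d) :
    (b - 1 + i).choose i ≤ (b - 1 + d).choose d := by
  rw [← Nat.choose_symm_add, ← Nat.choose_symm_add (b := d)]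
  exact Nat.choose_le_choose _ (by omega)

/-- Theorem 3.8 ii), existence: for all `r ≥ 2`, `e ≥ 4`, `r < a ≤ 2r`, `2 ≤ i ≤ e-2` and
`a ≤ v ≤ min (C(r-1+i, i) + C(a-r-1+i, i)) (C(r-1+e-i, e-i))`, there is a level algebra of
type 2, codimension `r` and socle degree `e` with `h_{e-1} = a` and `h_{e-i} = v`. -/
theorem stmt13 (k : Type) [Field k] [CharZero k] (r e a i v : ℕ)
    (hr : 2 ≤ r) (he : 4 ≤ e) (hra : r < a) (ha2r : a ≤ 2 * r)
    (hi2 : 2 ≤ i) (hie : i ≤ e - 2) (hv1 : a ≤ v)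
    (hv2 : v ≤ min ((r - 1 + i).choose i + (a - r - 1 + i).choose i)
      ((r - 1 + (e - i)).choose (e - i))) :
    ∃ I : Ideal (MvPolynomial (Fin r) k),
      IsLevelQuot k r e 2 I ∧ hilb k r I 1 = r ∧
      hilb k r I (e - 1) = a ∧ hilb k r I (e - i) = v := by
  classical
  obtain ⟨hvi, hvd⟩ := le_min_iff.1 hv2
  obtain ⟨b, rfl⟩ : ∃ b, a = r + b := ⟨a - r, by omega⟩
  obtain ⟨d, rfl⟩ : ∃ d, e = d + i := ⟨e - i, by omega⟩
  have hb1 : 1 ≤ b := by omega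
  have hbr : b ≤ r := by omega
  rw [show d + i - i = d by omega] at hvd ⊢
  rw [show r + b - r - 1 + i = b - 1 + i by omega] at hvi
  have hd2 : 2 ≤ d := by omega
  have hri := le_choose_self r i (by omega) (by omega)
  have hbi := le_choose_self b i hb1 (by omega)
  have hbd := le_choose_self b d hb1 (by omega)
  -- `X` is taken as large as possible; `Y` then needs more than `b` points only if `i < d`.
  obtain ⟨n, m, hnm, hrn, hni, hbm, hmi, hmd⟩ : ∃ n m, n + m = v ∧ r ≤ n ∧
      n ≤ (r - 1 + i).choose i ∧ b ≤ m ∧ m ≤ (b - 1 + i).choose i ∧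
      m ≤ (b - 1 + d).choose d := by
    rcases le_or_gt (v - b) ((r - 1 + i).choose i) with h | h
    · exact ⟨v - b, b, by omega, by omega, h, le_rfl, hbi, hbd⟩
    · have hid : i ≤ d := by
        by_contra! hlt
        have := choose_mono_degree r hlt.le
        omega
      have := choose_mono_degree b hid
      exact ⟨(r - 1 + i).choose i, v - (r - 1 + i).choose i, by omega, hri, le_rfl, by omega,
        by omega, by omega⟩
  obtain ⟨Y, hYc, -, hYi, hYd, hYs⟩ := exists_points (k := k) hb1 ∅ i d m (sep_empty d) hbm hmi
    (by simpa using hmd)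
  rw [Finset.union_empty] at hYd
  set T := Y.map (extendVec hbr) with hT
  have hTc : T.card = m := by rw [hT, Finset.card_map, hYc]
  obtain ⟨S, hSc, hST, hSi, hU, hSs⟩ := exists_points (k := k) (by omega) T i d n
    (hYd.map_extendVec hbr) hrn hni (by omega)
  have hSne : S.Nonempty := Finset.card_pos.1 (by omega)
  have hTne : T.Nonempty := Finset.card_pos.1 (by omega)
  refine ⟨annIdeal S T (d + i), ⟨fun f hf j => homogeneousComponent_mem_annIdeal hf j, ?_,
    hilb_annIdeal_top hST hSne hTne (hU.mono_degree (by omega) (by omega)), socle_annIdeal⟩,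
    hilb_annIdeal_one (n := d + i - 1) (by omega)
      ((hU.mono Finset.subset_union_left).mono_degree (by omega) (by omega)) hSs,
    hilb_annIdeal_pred hbr (by omega) hST hSs hYs (hU.mono_degree (by omega) (by omega)), ?_⟩
  · intro j hj
    rw [hilb_eq_finrank (V := Fin 0 → k) _ j 0]
    · simp
    · exact fun f hf => iff_of_true (mem_annIdeal_of_lt hf hj) rfl
    · exact fun w => ⟨0, isHomogeneous_zero _ _ _, Subsingleton.elim _ _⟩
  · rw [hilb_annIdeal_card hST rfl hSi (hYi.map_extendVec hbr) hU]
    omega
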